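/- For every H ∈ (0,1), ∫₀¹ ∫₀¹ |t − s|^{2H}·(1 − 2t)·(1 − 2s) dt ds = −H/(2 + 7H + 7H² + 2H³). -/

import Mathlib

open intervalIntegral in
theorem aux_lin (a c d x : ℝ) (ha : 0 < a) (hx : 0 ≤ x) :
    ∫ u in (0 : ℝ)..x, u ^ a * (c + d * u)
      = c * x ^ (a + 1) / (a + 1) + d * x ^ (a + 2) / (a + 2) := by
  have h1 : ∫ u in (0 : ℝ)..x, u ^ a * (c + d * u)
      = ∫ u in (0 : ℝ)..x, (c * u ^ a + d * u ^ (a + 1)) := by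
    apply integral_congr
    intro u hu
    rw [Set.uIcc_of_le hx] at hu
    simp only []
    rw [Real.rpow_add_one' hu.1 (by linarith)]
    ring
  rw [h1, integral_add, integral_const_mul, integral_const_mul,
    integral_rpow (Or.inl (by linarith)), integral_rpow (Or.inl (by linarith)),
    Real.zero_rpow (by linarith), Real.zero_rpow (by linarith),
    show a + 1 + 1 = a + 2 by ring]
  · ring
  · exact (intervalIntegrable_rpow' (by linarith)).const_mul _
  · exact (intervalIntegrable_rpow' (by linarith)).const_mul _

/-- half of the inner integral, times the outer weight -/
noncomputable def auxF (a t : ℝ) : ℝ :=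
  (1 - 2 * t) * ((1 - 2 * t) * t ^ (a + 1) / (a + 1) + 2 * t ^ (a + 2) / (a + 2))

theorem auxF_cont (a : ℝ) (ha : 0 < a) : Continuous (auxF a) := by
  have h1 : Continuous fun t : ℝ => t ^ (a + 1) := Real.continuous_rpow_const (by linarith)
  have h2 : Continuous fun t : ℝ => t ^ (a + 2) := Real.continuous_rpow_const (by linarith)
  unfold auxF
  fun_prop

open intervalIntegral in
theorem aux_inner (a t : ℝ) (ha : 0 < a) (h0 : 0 ≤ t) (h1 : t ≤ 1) :
    ∫ s in (0 : ℝ)..1, |t - s| ^ a * ((1 - 2 * t) * (1 - 2 * s))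
      = auxF a t + auxF a (1 - t) := by
  have hc : Continuous fun s : ℝ => |t - s| ^ a * ((1 - 2 * t) * (1 - 2 * s)) := by
    have : Continuous fun s : ℝ => |t - s| ^ a :=
      (Real.continuous_rpow_const ha.le).comp (by fun_prop : Continuous fun s : ℝ => |t - s|)
    fun_prop
  rw [← integral_add_adjacent_intervals (hc.intervalIntegrable 0 t) (hc.intervalIntegrable t 1)]
  congr 1
  · have e : ∫ s in (0 : ℝ)..t, |t - s| ^ a * ((1 - 2 * t) * (1 - 2 * s))
        = ∫ s in (0 : ℝ)..t, (fun u : ℝ => (1 - 2 * t) * (u ^ a * ((1 - 2 * t) + 2 * u))) (t - s) := by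
      apply integral_congr
      intro s hs
      rw [Set.uIcc_of_le h0] at hs
      simp only []
      rw [abs_of_nonneg (by linarith [hs.2])]
      ring
    rw [e, integral_comp_sub_left (fun u : ℝ => (1 - 2 * t) * (u ^ a * ((1 - 2 * t) + 2 * u))),
      sub_self, sub_zero, integral_const_mul, aux_lin a _ _ _ ha h0]
    rfl
  · have e : ∫ s in t..1, |t - s| ^ a * ((1 - 2 * t) * (1 - 2 * s))
        = ∫ s in t..1, (fun u : ℝ => (1 - 2 * t) * (u ^ a * ((1 - 2 * t) + (-2) * u))) (s - t) := by
      apply integral_congr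
      intro s hs
      rw [Set.uIcc_of_le h1] at hs
      simp only []
      rw [abs_sub_comm, abs_of_nonneg (by linarith [hs.1])]
      ring
    rw [e, integral_comp_sub_right (fun u : ℝ => (1 - 2 * t) * (u ^ a * ((1 - 2 * t) + (-2) * u))),
      sub_self, integral_const_mul,
      aux_lin a _ _ _ ha (by linarith)]
    unfold auxF
    ring

open intervalIntegral in
theorem aux_outer (a : ℝ) (ha : 0 < a) :
    ∫ t in (0 : ℝ)..1, auxF a t
      = (1 / (a + 2) - 4 / (a + 3) + 4 / (a + 4)) / (a + 1)
        + 2 / (a + 2) * (1 / (a + 3) - 2 / (a + 4)) := by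
  have e : ∫ t in (0 : ℝ)..1, auxF a t = ∫ t in (0 : ℝ)..1,
      ((1 / (a + 1)) * (t ^ (a + 1) * (1 + (-4) * t))
        + ((4 / (a + 1)) * (t ^ (a + 2) * (0 + 1 * t))
        + (2 / (a + 2)) * (t ^ (a + 2) * (1 + (-2) * t)))) := by
    apply integral_congr
    intro t ht
    rw [Set.uIcc_of_le zero_le_one] at ht
    simp only [auxF]
    have e2 : t ^ (a + 2) = t ^ (a + 1) * t := by
      rw [show a + 2 = (a + 1) + 1 by ring, Real.rpow_add_one' ht.1 (by linarith)]
    rw [e2]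
    ring
  have c1 : Continuous fun t : ℝ => t ^ (a + 1) := Real.continuous_rpow_const (by linarith)
  have c2 : Continuous fun t : ℝ => t ^ (a + 2) := Real.continuous_rpow_const (by linarith)
  rw [e, integral_add, integral_add, integral_const_mul, integral_const_mul, integral_const_mul,
    aux_lin _ _ _ _ (by linarith) zero_le_one, aux_lin _ _ _ _ (by linarith) zero_le_one,
    aux_lin _ _ _ _ (by linarith) zero_le_one]
  · simp only [Real.one_rpow]
    rw [show a + 1 + 1 = a + 2 by ring, show a + 1 + 2 = a + 3 by ring,
      show a + 2 + 1 = a + 3 by ring, show a + 2 + 2 = a + 4 by ring]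
    field_simp
    ring
  all_goals
    apply Continuous.intervalIntegrable
    fun_prop


/-- For every `H ∈ (0,1)`,
`∫₀¹ ∫₀¹ |t - s|^{2H} (1 - 2t)(1 - 2s) dt ds = -H/(2 + 7H + 7H² + 2H³)`. -/
theorem stmt16 (H : ℝ) (hH0 : 0 < H) (hH1 : H < 1) :
    ∫ t in (0 : ℝ)..1, ∫ s in (0 : ℝ)..1, |t - s| ^ (2 * H) * ((1 - 2 * t) * (1 - 2 * s))
      = -H / (2 + 7 * H + 7 * H ^ 2 + 2 * H ^ 3) := by

  have ha : 0 < 2 * H := by linarith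
  have e : ∫ t in (0 : ℝ)..1, ∫ s in (0 : ℝ)..1,
        |t - s| ^ (2 * H) * ((1 - 2 * t) * (1 - 2 * s))
      = ∫ t in (0 : ℝ)..1, (auxF (2 * H) t + auxF (2 * H) (1 - t)) := by
    apply intervalIntegral.integral_congr
    intro t ht
    rw [Set.uIcc_of_le zero_le_one] at ht
    exact aux_inner _ t ha ht.1 ht.2
  have hc := auxF_cont _ ha
  have hc2 : Continuous fun t : ℝ => auxF (2 * H) (1 - t) := by fun_prop
  rw [e, intervalIntegral.integral_add (hc.intervalIntegrable _ _)
    (hc2.intervalIntegrable _ _),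
    intervalIntegral.integral_comp_sub_left (auxF (2 * H)), sub_self, sub_zero, aux_outer _ ha]
  have h1 : 2 + 7 * H + 7 * H ^ 2 + 2 * H ^ 3 ≠ 0 := by positivity
  have h2 : 2 * H + 1 ≠ 0 := by positivity
  have h3 : 2 * H + 2 ≠ 0 := by positivity
  have h4 : 2 * H + 3 ≠ 0 := by positivity
  have h5 : 2 * H + 4 ≠ 0 := by positivity
  field_simp
  ring
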